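/- arXiv:math/0309082 — 2 statements merged into one kernel-verified Lean document; each statement's English description precedes it below -/
import Mathlib

section
/- For every q with 0 < q < 1 and all real λ, μ, the series Σ_{i=0}^∞ q^i p_i(λ) p_i(μ) e^{−μ²} converges and its sum equals the Mehler kernel K(q; λ, μ) = (π(1 − q²))^{−1/2} exp( −q²λ²/(1 − q²) − μ²/(1 − q²) + 2qλμ/(1 − q²) ). -/
/-- The physicist Hermite polynomials, as real functions:
`H₀ = 1`, `H₁(x) = 2x`, `H_{n+2}(x) = 2x·H_{n+1}(x) − 2(n+1)·H_n(x)`. -/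
noncomputable def physHermite : ℕ → ℝ → ℝ
  | 0 => fun _ => 1
  | 1 => fun x => 2 * x
  | (n + 2) => fun x => 2 * x * physHermite (n + 1) x - 2 * (n + 1) * physHermite n x

/-- The normalized Hermite polynomials `p_k(x) = H_k(x)/√(2^k k! √π)`, so that
`∫ p_i p_j e^{−x²} dx = δ_{ij}`. -/
noncomputable def normHermite (k : ℕ) (x : ℝ) : ℝ :=
  physHermite k x / Real.sqrt (2 ^ k * k.factorial * Real.sqrt Real.pi)

/-- The Mehler kernel
`K(q; λ, μ) = (π(1 − q²))^{−1/2} exp(−q²λ²/(1−q²) − μ²/(1−q²) + 2qλμ/(1−q²))`. -/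
noncomputable def mehlerK (q lam mu : ℝ) : ℝ :=
  (Real.sqrt (Real.pi * (1 - q ^ 2)))⁻¹ *
    Real.exp (-q ^ 2 * lam ^ 2 / (1 - q ^ 2) - mu ^ 2 / (1 - q ^ 2)
      + 2 * q * lam * mu / (1 - q ^ 2))

/- The generating series `A(q) = ∑ Hₙ(x) Hₙ(y) qⁿ / (2ⁿ n!)` and its companions with one or both
indices shifted are linked by the three-term recurrence; eliminating the companions leaves
`(1 - q²)² A' = (2 (x - q y) (y - q x) + q (1 - q²)) A`, an identity of formal power series.
The closed form is holomorphic on the unit disc and satisfies the same differential equation with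
the same value at `0`, so `A` is its Maclaurin series, and that series converges on the whole
disc. -/

open PowerSeries Filter Topology
open scoped Nat

section ShiftedProducts

variable {K : Type*} [Field K]

/-- The values `H₀(x), H₁(x), …` of the physicist Hermite polynomials at a point `x` of a field,
characterized by their three-term recurrence. The truncated index `n - 1` is harmless, since it is
multiplied by `n`. -/
structure IsHermiteSequence (x : K) (u : ℕ → K) : Prop where
  zero : u 0 = 1
  succ : ∀ n, u (n + 1) = 2 * x * u n - 2 * n * u (n - 1)

/-- The formal series `∑ uₙ vₙ qⁿ / (2ⁿ n!)`. For Hermite sequences `u` and `v` at `λ` and `μ` it is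
the left-hand side of Mehler's formula without the factor `e^{-μ²} / √π`. -/
noncomputable def mehlerSeries (u v : ℕ → K) : K⟦X⟧ :=
  PowerSeries.mk fun n => u n * v n / (2 ^ n * n !)

lemma mehlerSeries_comm (u v : ℕ → K) : mehlerSeries u v = mehlerSeries v u := by
  simp only [mehlerSeries, mul_comm (u _)]

lemma IsHermiteSequence.mehlerSeries_shift_shift_right {y : K} {v : ℕ → K}
    (hv : IsHermiteSequence y v) (u : ℕ → K) :
    mehlerSeries u (fun n => v (n + 2)) =
      2 * C y * mehlerSeries u (fun n => v (n + 1)) - 2 * d⁄dX K (X * mehlerSeries u v) := by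
  ext n
  rw [← map_ofNat (C (R := K)) 2, ← map_mul, map_sub, coeff_C_mul, coeff_C_mul, coeff_derivative,
    coeff_succ_X_mul]
  simp only [mehlerSeries, coeff_mk, hv.succ (n + 1), Nat.cast_succ, Nat.add_sub_cancel]
  ring

variable [CharZero K]

lemma derivative_mehlerSeries (u v : ℕ → K) :
    2 * d⁄dX K (mehlerSeries u v) =
      mehlerSeries (fun n => u (n + 1)) (fun n => v (n + 1)) := by
  ext n
  have hn : (n : K) + 1 ≠ 0 := n.cast_add_one_ne_zero
  rw [← map_ofNat (C (R := K)) 2, coeff_C_mul, coeff_derivative]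
  simp only [mehlerSeries, coeff_mk, pow_succ, Nat.factorial_succ, Nat.cast_mul, Nat.cast_succ]
  field_simp

lemma IsHermiteSequence.mehlerSeries_shift_left {x : K} {u : ℕ → K} (hu : IsHermiteSequence x u)
    (v : ℕ → K) :
    mehlerSeries (fun n => u (n + 1)) v =
      2 * C x * mehlerSeries u v - X * mehlerSeries u (fun n => v (n + 1)) := by
  ext n
  rw [← map_ofNat (C (R := K)) 2, ← map_mul, map_sub, coeff_C_mul]
  cases n with
  | zero => simp [mehlerSeries, hu.succ, mul_assoc]
  | succ n =>
    have hn : (n : K) + 1 ≠ 0 := n.cast_add_one_ne_zero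
    simp only [mehlerSeries, coeff_mk, coeff_succ_X_mul, hu.succ (n + 1), pow_succ,
      Nat.factorial_succ, Nat.cast_mul, Nat.cast_succ, Nat.add_sub_cancel]
    field_simp

lemma IsHermiteSequence.mehlerSeries_ode {x y : K} {u v : ℕ → K} (hu : IsHermiteSequence x u)
    (hv : IsHermiteSequence y v) :
    (1 - X ^ 2) ^ 2 * d⁄dX K (mehlerSeries u v) =
      (2 * (C x - C y * X) * (C y - C x * X) + X * (1 - X ^ 2)) * mehlerSeries u v := by
  set A := mehlerSeries u v
  set B := mehlerSeries (fun n => u (n + 1)) v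
  set E := mehlerSeries u (fun n => v (n + 1))
  set D := mehlerSeries (fun n => u (n + 1)) (fun n => v (n + 1))
  have hB : B = 2 * C x * A - X * E := hu.mehlerSeries_shift_left v
  have hE : E = 2 * C y * A - X * B := by
    have := hv.mehlerSeries_shift_left u
    rwa [mehlerSeries_comm, mehlerSeries_comm v u, mehlerSeries_comm v] at this
  have hD : D = 2 * C x * E - X * mehlerSeries u (fun n => v (n + 2)) :=
    hu.mehlerSeries_shift_left _
  have hA' : 2 * d⁄dX K A = D := derivative_mehlerSeries u v
  have hXA : d⁄dX K (X * A) = A + X * d⁄dX K A := by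
    simp only [Derivation.leibniz, derivative_X, smul_eq_mul]
    ring
  rw [hv.mehlerSeries_shift_shift_right, hXA] at hD
  have hE_closed : (1 - X ^ 2) * E = 2 * (C y - C x * X) * A := by
    linear_combination hE - X * hB
  have hD_closed : (1 - X ^ 2) * D = 2 * (C x - C y * X) * E + 2 * X * A := by
    linear_combination hD + X ^ 2 * hA'
  have h2 : (2 : K⟦X⟧) ≠ 0 := by
    rw [← map_ofNat (C (R := K)) 2, map_ne_zero_iff _ C_injective]
    exact two_ne_zero
  refine mul_left_cancel₀ h2 ?_
  linear_combination (1 - X ^ 2) ^ 2 * hA' + (1 - X ^ 2) * hD_closed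
    + 2 * (C x - C y * X) * hE_closed

end ShiftedProducts

lemma powerSeries_eq_of_linear_ode {K : Type*} [Field K] [CharZero K] {p r f g : K⟦X⟧}
    (hp : constantCoeff p ≠ 0) (hf : p * d⁄dX K f = r * f) (hg : p * d⁄dX K g = r * g)
    (h0 : constantCoeff f = constantCoeff g) : f = g := by
  have hsub : d⁄dX K (f - g) = p⁻¹ * r * (f - g) := by
    calc
      d⁄dX K (f - g) = p⁻¹ * p * d⁄dX K (f - g) := by rw [PowerSeries.inv_mul_cancel p hp, one_mul]
      _ = p⁻¹ * r * (f - g) := by rw [map_sub]; linear_combination p⁻¹ * (hf - hg)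
  have hcoeff (n : ℕ) : coeff n (f - g) = 0 := by
    induction n using Nat.strong_induction_on with
    | _ n ih =>
      cases n with
      | zero => simpa [sub_eq_zero] using h0
      | succ n =>
        have hn : coeff (n + 1) (f - g) * ((n : K) + 1) = 0 := by
          rw [← coeff_derivative, hsub, coeff_mul]
          refine Finset.sum_eq_zero fun ij hij => ?_
          have hlt : ij.2 < n + 1 :=
            Nat.lt_succ_of_le (Finset.HasAntidiagonal.antidiagonal.snd_le hij)
          rw [ih ij.2 hlt, mul_zero]
        exact (mul_eq_zero.mp hn).resolve_right n.cast_add_one_ne_zero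
  exact sub_eq_zero.mp (PowerSeries.ext hcoeff)

section MaclaurinSeries

variable {𝕜 : Type*} [NontriviallyNormedField 𝕜]

/-- The formal Taylor series of `f` at `0`. -/
noncomputable def maclaurinSeries (f : 𝕜 → 𝕜) : 𝕜⟦X⟧ :=
  PowerSeries.mk fun n => iteratedDeriv n f 0 / n !

lemma constantCoeff_maclaurinSeries (f : 𝕜 → 𝕜) : constantCoeff (maclaurinSeries f) = f 0 := by
  simp [maclaurinSeries]

lemma maclaurinSeries_congr {f g : 𝕜 → 𝕜} (h : f =ᶠ[𝓝 0] g) :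
    maclaurinSeries f = maclaurinSeries g := by
  ext n
  simp only [maclaurinSeries, coeff_mk, h.iteratedDeriv_eq n]

lemma iteratedDeriv_polynomial_eval (p : Polynomial 𝕜) (n : ℕ) :
    iteratedDeriv n (fun z => p.eval z) = fun z => (Polynomial.derivative^[n] p).eval z := by
  induction n generalizing p with
  | zero => rfl
  | succ n ih =>
    have hderiv : deriv (fun z => p.eval z) = fun z => p.derivative.eval z :=
      funext fun _ => p.deriv
    rw [iteratedDeriv_succ', hderiv, ih, Function.iterate_succ_apply]

variable [CharZero 𝕜]

lemma maclaurinSeries_deriv (f : 𝕜 → 𝕜) :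
    maclaurinSeries (deriv f) = d⁄dX 𝕜 (maclaurinSeries f) := by
  ext n
  have hn : (n : 𝕜) + 1 ≠ 0 := n.cast_add_one_ne_zero
  rw [coeff_derivative]
  simp only [maclaurinSeries, coeff_mk, iteratedDeriv_succ', Nat.factorial_succ, Nat.cast_mul,
    Nat.cast_succ]
  field_simp

lemma maclaurinSeries_polynomial (p : Polynomial 𝕜) :
    maclaurinSeries (fun z => p.eval z) = p := by
  ext n
  simp only [maclaurinSeries, coeff_mk, iteratedDeriv_polynomial_eval]
  rw [← Polynomial.coeff_zero_eq_eval_zero,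
    Polynomial.coeff_iterate_derivative, zero_add, Nat.descFactorial_self, nsmul_eq_mul,
    Polynomial.coeff_coe, mul_div_cancel_left₀ _ (Nat.cast_ne_zero.mpr n.factorial_ne_zero)]

variable [CompleteSpace 𝕜]

lemma maclaurinSeries_mul {f g : 𝕜 → 𝕜} (hf : AnalyticAt 𝕜 f 0) (hg : AnalyticAt 𝕜 g 0) :
    maclaurinSeries (fun z => f z * g z) = maclaurinSeries f * maclaurinSeries g := by
  ext n
  simp only [maclaurinSeries, coeff_mk, coeff_mul]
  rw [iteratedDeriv_fun_mul hf.contDiffAt hg.contDiffAt, Finset.sum_div,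
    Finset.Nat.sum_antidiagonal_eq_sum_range_succ_mk]
  refine Finset.sum_congr rfl fun i hi => ?_
  rw [Nat.cast_choose 𝕜 (Finset.mem_range_succ_iff.mp hi)]
  have hn : (n ! : 𝕜) ≠ 0 := Nat.cast_ne_zero.mpr n.factorial_ne_zero
  field_simp

lemma maclaurinSeries_linear_ode {f : 𝕜 → 𝕜} (hf : AnalyticAt 𝕜 f 0) {p r : Polynomial 𝕜}
    (h : ∀ᶠ z in 𝓝 0, p.eval z * deriv f z = r.eval z * f z) :
    (p : 𝕜⟦X⟧) * d⁄dX 𝕜 (maclaurinSeries f) = r * maclaurinSeries f := by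
  have hpoly (s : Polynomial 𝕜) : AnalyticAt 𝕜 (fun z => s.eval z) 0 :=
    AnalyticOnNhd.eval_polynomial s 0 (Set.mem_univ 0)
  rw [← maclaurinSeries_deriv, ← maclaurinSeries_polynomial p, ← maclaurinSeries_polynomial r,
    ← maclaurinSeries_mul (hpoly p) hf.deriv, ← maclaurinSeries_mul (hpoly r) hf]
  exact maclaurinSeries_congr h

end MaclaurinSeries

lemma hasSum_maclaurinSeries {f : ℂ → ℂ} {ρ : ℝ} (hf : DifferentiableOn ℂ f (Metric.ball 0 ρ))
    {z : ℂ} (hz : z ∈ Metric.ball 0 ρ) :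
    HasSum (fun n => coeff n (maclaurinSeries f) * z ^ n) (f z) := by
  convert! Complex.hasSum_taylorSeries_on_ball hf hz using 2 with n
  simp only [maclaurinSeries, coeff_mk, sub_zero, smul_eq_mul]
  ring

/-- The sum `∑ Hₙ(x) Hₙ(y) qⁿ / (2ⁿ n!)` in closed form. The factor `(1 - q²)^(-1/2)` is written
with the principal logarithm, so that it is holomorphic in `q` on the unit disc. -/
noncomputable def mehlerClosedForm (x y q : ℂ) : ℂ :=
  Complex.exp (-Complex.log (1 - q ^ 2) / 2
    + (2 * x * y * q - (x ^ 2 + y ^ 2) * q ^ 2) / (1 - q ^ 2))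

lemma one_sub_sq_mem_slitPlane {q : ℂ} (hq : ‖q‖ < 1) : 1 - q ^ 2 ∈ Complex.slitPlane := by
  rw [sub_eq_add_neg]
  refine Complex.mem_slitPlane_of_norm_lt_one ?_
  rw [norm_neg, norm_pow]
  exact pow_lt_one₀ (norm_nonneg q) hq two_ne_zero

lemma hasDerivAt_mehlerClosedForm (x y : ℂ) {q : ℂ} (hq : ‖q‖ < 1) :
    HasDerivAt (mehlerClosedForm x y)
      ((2 * (x - y * q) * (y - x * q) + q * (1 - q ^ 2)) / (1 - q ^ 2) ^ 2
        * mehlerClosedForm x y q) q := by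
  have hslit := one_sub_sq_mem_slitPlane hq
  have hne : 1 - q ^ 2 ≠ 0 := Complex.slitPlane_ne_zero hslit
  have hden : HasDerivAt (fun z : ℂ => 1 - z ^ 2) (-(2 * q)) q := by
    simpa using (hasDerivAt_pow 2 q).const_sub 1
  have hnum : HasDerivAt (fun z : ℂ => 2 * x * y * z - (x ^ 2 + y ^ 2) * z ^ 2)
      (2 * x * y - (x ^ 2 + y ^ 2) * (2 * q)) q := by
    simpa using ((hasDerivAt_id q).const_mul (2 * x * y)).fun_sub
      ((hasDerivAt_pow 2 q).const_mul (x ^ 2 + y ^ 2))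
  refine (((hden.clog hslit).neg.div_const 2).add (hnum.div hden hne)).cexp.congr_deriv ?_
  rw [mul_comm]
  refine congrArg₂ (· * ·) ?_ rfl
  field_simp
  ring

lemma maclaurinSeries_mehlerClosedForm_ode (x y : ℂ) :
    (1 - X ^ 2) ^ 2 * d⁄dX ℂ (maclaurinSeries (mehlerClosedForm x y)) =
      (2 * (C x - C y * X) * (C y - C x * X) + X * (1 - X ^ 2)) *
        maclaurinSeries (mehlerClosedForm x y) := by
  have hball : ∀ᶠ z : ℂ in 𝓝 0, ‖z‖ < 1 :=
    continuous_norm.continuousAt.eventually_lt_const (by simp)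
  have hanalytic : AnalyticAt ℂ (mehlerClosedForm x y) 0 :=
    Complex.analyticAt_iff_eventually_differentiableAt.mpr <|
      hball.mono fun z hz => (hasDerivAt_mehlerClosedForm x y hz).differentiableAt
  let p : Polynomial ℂ := (1 - Polynomial.X ^ 2) ^ 2
  let r : Polynomial ℂ := 2 * (Polynomial.C x - Polynomial.C y * Polynomial.X)
      * (Polynomial.C y - Polynomial.C x * Polynomial.X)
    + Polynomial.X * (1 - Polynomial.X ^ 2)
  have hode : ∀ᶠ z in 𝓝 0, p.eval z * deriv (mehlerClosedForm x y) z =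
      r.eval z * mehlerClosedForm x y z := hball.mono fun z hz => by
    have hne : 1 - z ^ 2 ≠ 0 := Complex.slitPlane_ne_zero (one_sub_sq_mem_slitPlane hz)
    rw [(hasDerivAt_mehlerClosedForm x y hz).deriv]
    simp only [p, r, Polynomial.eval_add, Polynomial.eval_sub, Polynomial.eval_mul,
      Polynomial.eval_pow, Polynomial.eval_X, Polynomial.eval_C, Polynomial.eval_one,
      Polynomial.eval_ofNat]
    field_simp
  have hcoe_two : ((2 : Polynomial ℂ) : ℂ⟦X⟧) = 2 := map_ofNat Polynomial.coeToPowerSeries.ringHom 2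
  simpa only [p, r, Polynomial.coe_add, Polynomial.coe_sub, Polynomial.coe_mul, Polynomial.coe_pow,
    Polynomial.coe_X, Polynomial.coe_C, Polynomial.coe_one, hcoe_two]
    using maclaurinSeries_linear_ode hanalytic hode

lemma maclaurinSeries_mehlerClosedForm {x y : ℂ} {u v : ℕ → ℂ} (hu : IsHermiteSequence x u)
    (hv : IsHermiteSequence y v) :
    maclaurinSeries (mehlerClosedForm x y) = mehlerSeries u v := by
  have hinit : constantCoeff (maclaurinSeries (mehlerClosedForm x y)) =
      constantCoeff (mehlerSeries u v) := by
    rw [constantCoeff_maclaurinSeries]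
    simp [mehlerClosedForm, mehlerSeries, hu.zero, hv.zero]
  exact powerSeries_eq_of_linear_ode (by simp) (maclaurinSeries_mehlerClosedForm_ode x y)
    (hu.mehlerSeries_ode hv) hinit

theorem IsHermiteSequence.hasSum_mehler {x y : ℂ} {u v : ℕ → ℂ} (hu : IsHermiteSequence x u)
    (hv : IsHermiteSequence y v) {q : ℂ} (hq : ‖q‖ < 1) :
    HasSum (fun n => u n * v n / (2 ^ n * n !) * q ^ n) (mehlerClosedForm x y q) := by
  have hdiff : DifferentiableOn ℂ (mehlerClosedForm x y) (Metric.ball 0 1) := fun z hz =>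
    (hasDerivAt_mehlerClosedForm x y (mem_ball_zero_iff.mp hz)).differentiableAt
      |>.differentiableWithinAt
  have hsum := hasSum_maclaurinSeries hdiff (mem_ball_zero_iff.mpr hq)
  simpa only [maclaurinSeries_mehlerClosedForm hu hv, mehlerSeries, coeff_mk] using hsum

lemma isHermiteSequence_physHermite (x : ℝ) :
    IsHermiteSequence (x : ℂ) fun n => (physHermite n x : ℂ) where
  zero := by simp [physHermite]
  succ n := by cases n <;> simp [physHermite]

lemma mehlerClosedForm_ofReal (x y : ℝ) {q : ℝ} (hq : |q| < 1) :
    mehlerClosedForm x y q =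
      ((√(1 - q ^ 2))⁻¹ *
        Real.exp ((2 * x * y * q - (x ^ 2 + y ^ 2) * q ^ 2) / (1 - q ^ 2)) : ℝ) := by
  have hpos : 0 < 1 - q ^ 2 := sub_pos.mpr ((sq_lt_one_iff_abs_lt_one q).mpr hq)
  have hsqrt : (√(1 - q ^ 2))⁻¹ = Real.exp (-Real.log (1 - q ^ 2) / 2) := by
    rw [neg_div, Real.exp_neg, Real.exp_half, Real.exp_log hpos]
  rw [hsqrt, ← Real.exp_add, mehlerClosedForm]
  push_cast [Complex.ofReal_log hpos.le]
  rfl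

theorem hasSum_physHermite_mul (x y : ℝ) {q : ℝ} (hq : |q| < 1) :
    HasSum (fun n => physHermite n x * physHermite n y / (2 ^ n * n !) * q ^ n)
      ((√(1 - q ^ 2))⁻¹ *
        Real.exp ((2 * x * y * q - (x ^ 2 + y ^ 2) * q ^ 2) / (1 - q ^ 2))) := by
  have hsum := (isHermiteSequence_physHermite x).hasSum_mehler (isHermiteSequence_physHermite y)
    (q := q) (by rwa [Complex.norm_real])
  rw [mehlerClosedForm_ofReal x y hq] at hsum
  exact Complex.hasSum_ofReal.mp (by exact_mod_cast hsum)

lemma normHermite_mul_normHermite (n : ℕ) (x y : ℝ) :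
    normHermite n x * normHermite n y =
      physHermite n x * physHermite n y / (2 ^ n * n ! * √Real.pi) := by
  rw [normHermite, normHermite, div_mul_div_comm, Real.mul_self_sqrt (by positivity)]

lemma mehlerK_eq (x y : ℝ) {q : ℝ} (hq : q ^ 2 ≠ 1) :
    mehlerK q x y = (√(1 - q ^ 2))⁻¹ *
      Real.exp ((2 * x * y * q - (x ^ 2 + y ^ 2) * q ^ 2) / (1 - q ^ 2)) *
      (Real.exp (-y ^ 2) / √Real.pi) := by
  have hne : 1 - q ^ 2 ≠ 0 := sub_ne_zero.mpr hq.symm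
  have hexp : -q ^ 2 * x ^ 2 / (1 - q ^ 2) - y ^ 2 / (1 - q ^ 2) + 2 * q * x * y / (1 - q ^ 2) =
      (2 * x * y * q - (x ^ 2 + y ^ 2) * q ^ 2) / (1 - q ^ 2) + -y ^ 2 := by
    field_simp
    ring
  rw [mehlerK, hexp, Real.exp_add, Real.sqrt_mul Real.pi_nonneg, mul_inv]
  ring

theorem mehler_formula_general (q : ℝ) (hq : |q| < 1) (lam mu : ℝ) :
    HasSum (fun i : ℕ => q ^ i * normHermite i lam * normHermite i mu * Real.exp (-mu ^ 2))
      (mehlerK q lam mu) := by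
  rw [mehlerK_eq lam mu ((sq_lt_one_iff_abs_lt_one q).mpr hq).ne]
  convert! (hasSum_physHermite_mul lam mu hq).mul_right (Real.exp (-mu ^ 2) / √Real.pi) using 2
    with n
  rw [mul_assoc (q ^ n), normHermite_mul_normHermite]
  ring

/-- **Mehler's formula (equation (3.1) of Tracy–Widom, "Differential Equations for Dyson
Processes").**  For `0 < q < 1` and all real `λ, μ`, the series
`Σ_{i=0}^∞ q^i p_i(λ) p_i(μ) e^{−μ²}` converges with sum the Mehler kernel `K(q; λ, μ)`. -/
theorem mehler_formula (q : ℝ) (hq0 : 0 < q) (hq1 : q < 1) (lam mu : ℝ) :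
    HasSum (fun i : ℕ => q ^ i * normHermite i lam * normHermite i mu * Real.exp (-mu ^ 2))
      (mehlerK q lam mu) :=
  mehler_formula_general q (abs_lt.mpr ⟨by linarith, hq1⟩) lam mu
end

section
/- For every q with 0 < q < 1, every nonnegative integer i, and every real λ, the function μ ↦ K(q; λ, μ) p_i(μ) is integrable on ℝ and ∫_ℝ K(q; λ, μ) p_i(μ) dμ = q^i p_i(λ). -/
open MeasureTheory

/-!
With `2v = 1 − q²`, the kernel `K(q; λ, ·)` is the density of the normal law `N(qλ, v)`, so the
claim is that `E[H_n] = qⁿ H_n(λ)` under this law. Stein's identity `E[(x − m) p(x)] = v E[p′(x)]`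
and `H_{n+1}′ = 2(n+1) H_n` turn the three-term recurrence of `H_n` into
`E[H_{n+2}] = 2m E[H_{n+1}] − 2(n+1)(1 − 2v) E[H_n]`; since `m = qλ` and `1 − 2v = q²`, the
sequence `qⁿ H_n(λ)` satisfies the same recurrence with the same initial values.
-/

open ProbabilityTheory Polynomial
open scoped NNReal

/-- The physicist Hermite polynomials as elements of `ℝ[X]`, so that derivatives and Gaussian
moments can be taken at the level of polynomials. -/
noncomputable def physHermitePoly : ℕ → ℝ[X]
  | 0 => 1
  | 1 => 2 * X
  | (n + 2) => 2 * X * physHermitePoly (n + 1) - 2 * ((n : ℝ[X]) + 1) * physHermitePoly n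

lemma eval_physHermitePoly (n : ℕ) (x : ℝ) : (physHermitePoly n).eval x = physHermite n x := by
  induction n using Nat.twoStepInduction with
  | zero => simp [physHermitePoly, physHermite]
  | one => simp [physHermitePoly, physHermite]
  | more n ih₀ ih₁ => simp [physHermitePoly, physHermite, ih₀, ih₁]

lemma derivative_physHermitePoly_succ (n : ℕ) :
    derivative (physHermitePoly (n + 1)) = 2 * ((n : ℝ[X]) + 1) * physHermitePoly n := by
  induction n using Nat.twoStepInduction with
  | zero => simp [physHermitePoly]
  | one =>
    simp only [physHermitePoly, derivative_sub, derivative_mul, derivative_add, derivative_ofNat,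
      derivative_X, derivative_natCast, derivative_one]
    push_cast
    ring
  | more n ih₀ ih₁ =>
    rw [physHermitePoly]
    simp only [derivative_sub, derivative_mul, derivative_add, derivative_ofNat, derivative_X,
      derivative_natCast, derivative_one, ih₀, ih₁]
    rw [physHermitePoly]
    push_cast
    ring

lemma integrable_polynomial_eval_of_mem_interior_integrableExpSet {Ω : Type*}
    [MeasurableSpace Ω] {μ : Measure Ω} {Y : Ω → ℝ} (h : 0 ∈ interior (integrableExpSet Y μ))
    (p : ℝ[X]) : Integrable (fun ω ↦ p.eval (Y ω)) μ := by
  simp only [eval_eq_sum_range]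
  exact integrable_finsetSum _ fun n _ ↦
    (integrable_pow_of_mem_interior_integrableExpSet h n).const_mul _

section Gaussian

variable {m : ℝ} {v : ℝ≥0}

lemma integrable_gaussianReal_iff {E : Type*} [NormedAddCommGroup E] [NormedSpace ℝ E]
    {f : ℝ → E} (hv : v ≠ 0) :
    Integrable f (gaussianReal m v) ↔ Integrable (fun x ↦ gaussianPDFReal m v x • f x) := by
  rw [gaussianReal_of_var_ne_zero m hv, integrable_withDensity_iff_integrable_smul'
    (measurable_gaussianPDF m v) (ae_of_all _ fun _ ↦ gaussianPDF_lt_top)]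
  simp only [toReal_gaussianPDF]

lemma hasDerivAt_gaussianPDFReal (x : ℝ) :
    HasDerivAt (gaussianPDFReal m v) (-((x - m) / v) * gaussianPDFReal m v x) x := by
  have hexponent : HasDerivAt (fun y ↦ -(y - m) ^ 2 / (2 * v)) (-((x - m) / v)) x := by
    refine ((((hasDerivAt_id x).sub_const m).pow 2).neg.div_const (2 * (v : ℝ))).congr_deriv ?_
    simp only [Nat.cast_ofNat, id_eq, Nat.add_one_sub_one, pow_one, mul_one]
    ring
  exact (hexponent.exp.const_mul _).congr_deriv (by rw [gaussianPDFReal]; ring)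

/-- **Stein's identity** for the normal distribution. -/
lemma integral_sub_mean_smul_gaussianReal {E : Type*} [NormedAddCommGroup E] [NormedSpace ℝ E]
    {f f' : ℝ → E} (hderiv : ∀ x, HasDerivAt f (f' x) x)
    (hf : Integrable f (gaussianReal m v)) (hf' : Integrable f' (gaussianReal m v))
    (hxf : Integrable (fun x ↦ (x - m) • f x) (gaussianReal m v)) :
    ∫ x, (x - m) • f x ∂gaussianReal m v = (v : ℝ) • ∫ x, f' x ∂gaussianReal m v := by
  by_cases hE : CompleteSpace E
  swap
  · simp [integral, hE]
  rcases eq_or_ne v 0 with rfl | hv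
  · simp
  have hderiv_mul (x : ℝ) : HasDerivAt (fun y ↦ gaussianPDFReal m v y • f y)
      (gaussianPDFReal m v x • (f' x - (v : ℝ)⁻¹ • (x - m) • f x)) x := by
    refine ((hasDerivAt_gaussianPDFReal x).smul (hderiv x)).congr_deriv ?_
    module
  have hzero : ∫ x, (f' x - (v : ℝ)⁻¹ • (x - m) • f x) ∂gaussianReal m v = 0 := by
    rw [integral_gaussianReal_eq_integral_smul hv]
    exact integral_eq_zero_of_hasDerivAt_of_integrable hderiv_mul
      ((integrable_gaussianReal_iff hv).mp (hf'.sub (hxf.smul _)))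
      ((integrable_gaussianReal_iff hv).mp hf)
  rw [integral_sub hf' (hxf.fun_smul _), integral_smul, sub_eq_zero] at hzero
  rw [hzero, smul_inv_smul₀ (NNReal.coe_ne_zero.mpr hv)]

lemma integrable_polynomial_eval_gaussianReal (p : ℝ[X]) :
    Integrable (fun x ↦ p.eval x) (gaussianReal m v) :=
  integrable_polynomial_eval_of_mem_interior_integrableExpSet (by simp) p

lemma integrable_mul_polynomial_eval_gaussianReal (p : ℝ[X]) :
    Integrable (fun x ↦ x * p.eval x) (gaussianReal m v) := by
  have hXp := integrable_polynomial_eval_gaussianReal (m := m) (v := v) (X * p)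
  simpa only [eval_mul, eval_X] using hXp

lemma integral_mul_polynomial_eval_gaussianReal (p : ℝ[X]) :
    ∫ x, x * p.eval x ∂gaussianReal m v =
      m * ∫ x, p.eval x ∂gaussianReal m v + v * ∫ x, (derivative p).eval x ∂gaussianReal m v := by
  have hp := integrable_polynomial_eval_gaussianReal (m := m) (v := v) p
  have hxp := integrable_mul_polynomial_eval_gaussianReal (m := m) (v := v) p
  have hstein := integral_sub_mean_smul_gaussianReal p.hasDerivAt hp
    (integrable_polynomial_eval_gaussianReal (derivative p))
    (by simpa only [smul_eq_mul, sub_mul] using! hxp.sub (hp.const_mul m))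
  simp only [smul_eq_mul, sub_mul] at hstein
  rw [integral_sub hxp (hp.const_mul m), integral_const_mul] at hstein
  linarith

lemma integrable_physHermite_gaussianReal (n : ℕ) :
    Integrable (physHermite n) (gaussianReal m v) := by
  simpa only [eval_physHermitePoly] using
    integrable_polynomial_eval_gaussianReal (physHermitePoly n)

lemma integral_physHermite_gaussianReal_add_two (n : ℕ) :
    ∫ x, physHermite (n + 2) x ∂gaussianReal m v =
      2 * m * ∫ x, physHermite (n + 1) x ∂gaussianReal m v -
        2 * (n + 1) * (1 - 2 * v) * ∫ x, physHermite n x ∂gaussianReal m v := by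
  have hxH : Integrable (fun x ↦ x * physHermite (n + 1) x) (gaussianReal m v) := by
    simpa only [eval_physHermitePoly] using
      integrable_mul_polynomial_eval_gaussianReal (physHermitePoly (n + 1))
  have hparts : ∫ x, x * physHermite (n + 1) x ∂gaussianReal m v =
      m * ∫ x, physHermite (n + 1) x ∂gaussianReal m v +
        v * (2 * (n + 1) * ∫ x, physHermite n x ∂gaussianReal m v) := by
    simpa [derivative_physHermitePoly_succ, eval_physHermitePoly, integral_const_mul] using
      integral_mul_polynomial_eval_gaussianReal (m := m) (v := v) (physHermitePoly (n + 1))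
  simp only [physHermite, mul_assoc 2 _ (physHermite (n + 1) _)]
  rw [integral_sub (hxH.const_mul 2) ((integrable_physHermite_gaussianReal n).const_mul _),
    integral_const_mul, integral_const_mul, hparts]
  ring

lemma integral_physHermite_gaussianReal {q : ℝ} (hqv : q ^ 2 + 2 * v = 1) (lam : ℝ) (n : ℕ) :
    ∫ x, physHermite n x ∂gaussianReal (q * lam) v = q ^ n * physHermite n lam := by
  induction n using Nat.twoStepInduction with
  | zero => simp [physHermite]
  | one =>
    simp only [physHermite]
    rw [integral_const_mul, integral_id_gaussianReal]
    ring
  | more n ih₀ ih₁ =>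
    have hq : 1 - 2 * (v : ℝ) = q ^ 2 := by linarith
    rw [integral_physHermite_gaussianReal_add_two, ih₀, ih₁, hq, physHermite]
    ring

lemma mehlerK_eq_gaussianPDFReal {q : ℝ} (hqv : q ^ 2 + 2 * v = 1) (lam : ℝ) :
    mehlerK q lam = gaussianPDFReal (q * lam) v := by
  have hv : 1 - q ^ 2 = 2 * v := by linarith
  funext mu
  rw [mehlerK, gaussianPDFReal, hv]
  congr 2
  · rw [mul_left_comm, mul_assoc]
  · ring

end Gaussian

theorem mehler_eigenfunction_general {q : ℝ} (hq : |q| < 1) (i : ℕ) (lam : ℝ) :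
    Integrable (fun mu ↦ mehlerK q lam mu * normHermite i mu) ∧
    ∫ mu, mehlerK q lam mu * normHermite i mu = q ^ i * normHermite i lam := by
  have hq_sq : 0 < 1 - q ^ 2 := sub_pos.mpr ((sq_lt_one_iff_abs_lt_one q).mpr hq)
  obtain ⟨v, hv⟩ : ∃ v : ℝ≥0, (v : ℝ) = (1 - q ^ 2) / 2 := ⟨⟨_, (half_pos hq_sq).le⟩, rfl⟩
  have hv₀ : v ≠ 0 := NNReal.coe_ne_zero.mp (hv ▸ (half_pos hq_sq).ne')
  have hqv : q ^ 2 + 2 * v = 1 := by linarith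
  simp only [mehlerK_eq_gaussianPDFReal hqv, ← smul_eq_mul (gaussianPDFReal _ _ _)]
  rw [← integrable_gaussianReal_iff hv₀, ← integral_gaussianReal_eq_integral_smul hv₀]
  refine ⟨(integrable_physHermite_gaussianReal i).div_const _, ?_⟩
  simp only [normHermite, integral_div, integral_physHermite_gaussianReal hqv, mul_div_assoc]

/-- **Equation (3.2) of Tracy–Widom, "Differential Equations for Dyson Processes".**
For `0 < q < 1`, every `i` and every real `λ`, the function `μ ↦ K(q; λ, μ) p_i(μ)` is
integrable on `ℝ` and `∫ K(q; λ, μ) p_i(μ) dμ = q^i p_i(λ)`. -/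
theorem mehler_eigenfunction (q : ℝ) (hq0 : 0 < q) (hq1 : q < 1) (i : ℕ) (lam : ℝ) :
    Integrable (fun mu => mehlerK q lam mu * normHermite i mu) (volume : Measure ℝ) ∧
    ∫ mu : ℝ, mehlerK q lam mu * normHermite i mu = q ^ i * normHermite i lam :=
  mehler_eigenfunction_general (abs_lt.mpr ⟨by linarith, hq1⟩) i lam
end
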